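/- Let K : [0,∞) → [0,∞) be right-continuous, nondecreasing, positive on (0,∞) and doubling, satisfying conditions (2.1) and (2.2). Let n ≥ 2 be an integer, let f be analytic on the unit disk 𝔻 with f ∈ Q_K, let F(z) = ∫₀ᶻ f(w) dw be its primitive, and assume F ∈ H² with a.e. radial boundary values F*. Then there exists a function F̃ of class C¹ on the exterior domain {z ∈ ℂ : |z| > 1} such that: (a) for a.e. θ ∈ [0,2π], F̃(re^{iθ}) → F*(θ) as r → 1⁺; (b) F̃(z) = O(z^n) as z → ∞; (c) ∂̄F̃(z) = O(z^{n−2}) as z → ∞; and (d) sup_{a∈𝔻} ∫_{|z|>1} (|∂̄F̃(z)|²/(|z|^n − 1)²) · K(1 − 1/|σ_a(z)|²) dA(z) < ∞. -/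

import Mathlib

open MeasureTheory Metric Complex Filter Set
open scoped ENNReal Real Topology

noncomputable section

/-- The Möbius transformation `σ_a(z) = (a - z)/(1 - conj a · z)`. -/
def mobius (a z : ℂ) : ℂ := (a - z) / (1 - (starRingEnd ℂ) a * z)

/-- The Cauchy–Riemann (Wirtinger) operator `∂̄g = (1/2)(∂g/∂x + i ∂g/∂y)`. -/
def dbar (g : ℂ → ℂ) (z : ℂ) : ℂ :=
  (1 / 2 : ℂ) * (fderiv ℝ g z 1 + Complex.I * fderiv ℝ g z Complex.I)

/-- `φ_K(s) = sup_{0 ≤ t ≤ 1} K(st)/K(t)`. -/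
def phiK (K : ℝ → ℝ) (s : ℝ) : ℝ :=
  sSup ((fun t => K (s * t) / K t) '' Set.Icc (0 : ℝ) 1)

/-- Condition (2.1): `∫₀¹ φ_K(s)/s ds < ∞`. -/
def Cond21 (K : ℝ → ℝ) : Prop :=
  IntegrableOn (fun s => phiK K s / s) (Set.Ioo (0 : ℝ) 1)

/-- Condition (2.2) with exponent `q`: `∫₁^∞ φ_K(s)/s^{1+q} ds < ∞`. -/
def Cond22 (K : ℝ → ℝ) (q : ℝ) : Prop :=
  IntegrableOn (fun s => phiK K s / s ^ (1 + q)) (Set.Ioi (1 : ℝ))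

/-- Membership in the space `Q_K`. -/
def MemQK (K : ℝ → ℝ) (f : ℂ → ℂ) : Prop :=
  (⨆ a ∈ ball (0 : ℂ) 1, ∫⁻ z in ball (0 : ℂ) 1,
      ENNReal.ofReal (‖deriv f z‖ ^ 2 * K (1 - ‖mobius a z‖ ^ 2))) < ⊤

/-- Membership in the Hardy space `H²`. -/
def MemH2 (F : ℂ → ℂ) : Prop :=
  ∃ M : ℝ, ∀ r ∈ Set.Ioo (0 : ℝ) 1,
    (∫ θ in (0 : ℝ)..(2 * Real.pi),
      ‖F ((r : ℂ) * Complex.exp (θ * Complex.I))‖ ^ 2) ≤ M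

/-- `Fb` is the a.e. radial boundary value function of `F` (from inside). -/
def RadialLimitIn (F : ℂ → ℂ) (Fb : ℝ → ℂ) : Prop :=
  ∀ᵐ (θ : ℝ) ∂(volume.restrict (Set.Ioc (0 : ℝ) (2 * Real.pi))),
    Tendsto (fun r : ℝ => F ((r : ℂ) * Complex.exp (θ * Complex.I)))
      (𝓝[<] 1) (𝓝 (Fb θ))

/-- `Fb` is the a.e. radial limit function of `G` from outside the circle. -/
def RadialLimitOut (G : ℂ → ℂ) (Fb : ℝ → ℂ) : Prop :=
  ∀ᵐ (θ : ℝ) ∂(volume.restrict (Set.Ioc (0 : ℝ) (2 * Real.pi))),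
    Tendsto (fun r : ℝ => G ((r : ℂ) * Complex.exp (θ * Complex.I)))
      (𝓝[>] 1) (𝓝 (Fb θ))

/-- `g(z) = O(z^m)` as `z → ∞`. -/
def BigOPow (g : ℂ → ℂ) (m : ℕ) : Prop :=
  ∃ C R : ℝ, 0 < C ∧ 0 < R ∧ ∀ z : ℂ, R ≤ ‖z‖ → ‖g z‖ ≤ C * ‖z‖ ^ m

/-!
Reflect `F` across the unit circle by its first order Taylor polynomial at `w = (conj z)⁻¹`:
`F̃(z) = F(w) + f(w) (z - w)`. The terms containing `∂̄w` with the factor `f(w)` cancel, leaving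
`∂̄F̃(z) = -f'(w) w² (z - w)`, and `|z - w| = |z| - 1/|z| ≤ |z|ⁿ - 1`. Since reflection has
Jacobian `|w|⁻⁴` and turns `σ_a(z)` into the reflection of `σ_a(w)`, the change of variables
`z ↦ w` bounds the weighted integral of `|∂̄F̃|²` by the `Q_K` integral of `f`.

For the boundary values, the weight `K(1 - |σ_a|²)` is bounded below on a disk about `a` of radius
proportional to `1 - |a|`, so the area mean value property of `f'²` shows that `f` is a Bloch
function. Hence `f` grows at most like `log (1 / (1 - |w|))`, and `f(w) (z - w)` vanishes on the
circle.
-/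

open EuclideanGeometry Module Asymptotics Bornology
open scoped ComplexConjugate

section AreaMeanValue

variable {E : Type*} [NormedAddCommGroup E] [NormedSpace ℂ E]

lemma lintegral_ball_comp_add_mul_of_norm_eq_one {u : ℂ} (hu : ‖u‖ = 1) (a : ℂ) (ρ : ℝ)
    (h : ℂ → ℝ≥0∞) : ∫⁻ z in ball 0 ρ, h (a + u * z) = ∫⁻ z in ball a ρ, h z := by
  let e : ℂ ≃ᵢ ℂ := (rotation ⟨u, mem_sphere_zero_iff_norm.2 hu⟩).toIsometryEquiv.trans
    (IsometryEquiv.addLeft a)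
  have he : MeasurePreserving (fun z => a + u * z) :=
    (measurePreserving_add_left volume a).comp
      (rotation ⟨u, mem_sphere_zero_iff_norm.2 hu⟩).measurePreserving
  have hball : (fun z => a + u * z) ⁻¹' ball a ρ = ball 0 ρ := by
    ext z
    simp [hu]
  rw [← hball, he.setLIntegral_comp_preimage_emb e.toHomeomorph.measurableEmbedding]

variable [CompleteSpace E] {g : ℂ → E} {a : ℂ} {ρ : ℝ}

lemma two_pi_mul_enorm_le_lintegral_circleMap (hg : DiffContOnCl ℂ g (ball a |ρ|)) :
    ENNReal.ofReal (2 * π) * ‖g a‖ₑ ≤ ∫⁻ θ in Ioc 0 (2 * π), ‖g (circleMap a ρ θ)‖ₑ := by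
  have hmean : ∫ θ in Ioc 0 (2 * π), g (circleMap a ρ θ) = (2 * π) • g a := by
    rw [← hg.circleAverage, Real.circleAverage_def, smul_inv_smul₀ Real.two_pi_pos.ne',
      intervalIntegral.integral_of_le Real.two_pi_pos.le]
  calc ENNReal.ofReal (2 * π) * ‖g a‖ₑ = ‖(2 * π) • g a‖ₑ := by
        rw [enorm_smul, Real.enorm_of_nonneg Real.two_pi_pos.le]
    _ ≤ ∫⁻ θ in Ioc 0 (2 * π), ‖g (circleMap a ρ θ)‖ₑ :=
        hmean ▸ enorm_integral_le_lintegral_enorm _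

lemma add_mul_mem_ball {u z : ℂ} (hu : ‖u‖ ≤ 1) (hz : z ∈ ball 0 ρ) : a + u * z ∈ ball a ρ := by
  rw [mem_ball_zero_iff] at hz
  rw [mem_ball, dist_self_add_left, norm_mul]
  exact (mul_le_of_le_one_left (norm_nonneg z) hu).trans_lt hz

lemma two_pi_mul_enorm_le_lintegral_circleMap_mul (hg : DifferentiableOn ℂ g (ball a ρ)) {z : ℂ}
    (hz : z ∈ ball 0 ρ) :
    ENNReal.ofReal (2 * π) * ‖g a‖ₑ ≤
      ∫⁻ θ in Ioc 0 (2 * π), ‖g (a + circleMap 0 1 θ * z)‖ₑ := by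
  have hd : DifferentiableOn ℂ (fun u => g (a + u * z)) (closedBall 0 1) :=
    hg.comp (by fun_prop) fun u hu => add_mul_mem_ball (mem_closedBall_zero_iff.1 hu) hz
  have hclosure : closure (ball (0 : ℂ) |1|) ⊆ closedBall 0 1 := by
    rw [abs_one]
    exact closure_ball_subset_closedBall
  simpa using two_pi_mul_enorm_le_lintegral_circleMap (hd.mono hclosure).diffContOnCl

theorem volume_ball_mul_enorm_le_lintegral_ball (hg : DifferentiableOn ℂ g (ball a ρ)) :
    volume (ball a ρ) * ‖g a‖ₑ ≤ ∫⁻ z in ball a ρ, ‖g z‖ₑ := by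
  have hnorm (θ : ℝ) : ‖circleMap 0 1 θ‖ = 1 := by simp
  have hmeas : AEMeasurable (fun p : ℂ × ℝ => ‖g (a + circleMap 0 1 p.2 * p.1)‖ₑ)
      ((volume.restrict (ball 0 ρ)).prod (volume.restrict (Ioc 0 (2 * π)))) := by
    rw [Measure.prod_restrict]
    refine ContinuousOn.aemeasurable ?_ (measurableSet_ball.prod measurableSet_Ioc)
    exact (hg.continuousOn.comp (by fun_prop)
      fun p hp => add_mul_mem_ball (hnorm p.2).le hp.1).enorm
  have hvol : volume (ball (0 : ℂ) ρ) = volume (ball a ρ) := by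
    rw [Complex.volume_ball, Complex.volume_ball]
  -- Averaging over the circles `θ ↦ a + e^{iθ} z`, `z ∈ ball 0 ρ`, needs no polar coordinates:
  -- after swapping the integrals, rotation invariance of area makes the `θ`-integrand constant.
  have htotal : ENNReal.ofReal (2 * π) * (volume (ball a ρ) * ‖g a‖ₑ) ≤
      ENNReal.ofReal (2 * π) * ∫⁻ z in ball a ρ, ‖g z‖ₑ := calc
    _ = ∫⁻ _ in ball (0 : ℂ) ρ, ENNReal.ofReal (2 * π) * ‖g a‖ₑ := by
        rw [setLIntegral_const, hvol]; ring
    _ ≤ ∫⁻ z in ball 0 ρ, ∫⁻ θ in Ioc 0 (2 * π), ‖g (a + circleMap 0 1 θ * z)‖ₑ :=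
        setLIntegral_mono' measurableSet_ball
          fun z hz => two_pi_mul_enorm_le_lintegral_circleMap_mul hg hz
    _ = ∫⁻ θ in Ioc 0 (2 * π), ∫⁻ z in ball 0 ρ, ‖g (a + circleMap 0 1 θ * z)‖ₑ :=
        lintegral_lintegral_swap hmeas
    _ = ∫⁻ _ in Ioc 0 (2 * π), ∫⁻ z in ball a ρ, ‖g z‖ₑ := by
        simp_rw [lintegral_ball_comp_add_mul_of_norm_eq_one (hnorm _) a ρ fun z => ‖g z‖ₑ]
    _ = _ := by
        rw [setLIntegral_const, Real.volume_Ioc, sub_zero, mul_comm]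
  exact (ENNReal.mul_le_mul_iff_right (by simp [Real.pi_pos]) ENNReal.ofReal_ne_top).1 htotal

end AreaMeanValue

section Inversion

variable {E : Type*} [NormedAddCommGroup E] [InnerProductSpace ℝ E] {c : E} {R : ℝ}

lemma image_inversion_ball_diff_center (hR : 0 < R) :
    inversion c R '' (ball c R \ {c}) = (closedBall c R)ᶜ := by
  rw [(inversion_involutive c hR.ne').image_eq_preimage_symm]
  ext x
  rcases eq_or_ne x c with rfl | hx
  · simp [hR.le]
  have hd : 0 < dist x c := dist_pos.2 hx
  simp [dist_inversion_center, inversion_eq_center hR.ne', hx, div_lt_iff₀ hd, sq, hR]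

variable [FiniteDimensional ℝ E]

lemma abs_det_smul_reflection (K : Submodule ℝ E) (r : ℝ) :
    |(r • (K.reflection : E →L[ℝ] E)).det| = |r| ^ finrank ℝ E := by
  have hdet : (r • (K.reflection : E →L[ℝ] E)).det =
      LinearMap.det (r • K.reflection.toLinearMap) := rfl
  rw [hdet, LinearMap.det_smul, K.det_reflection, abs_mul, abs_pow, abs_pow, abs_neg, abs_one,
    one_pow, mul_one]

variable [MeasurableSpace E] [BorelSpace E]

theorem setLIntegral_compl_closedBall_eq_inversion (hR : 0 < R) (u : E → ℝ≥0∞) :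
    ∫⁻ x in (closedBall c R)ᶜ, u x = ∫⁻ x in ball c R \ {c},
      ENNReal.ofReal ((R / dist x c) ^ (2 * finrank ℝ E)) * u (inversion c R x) := by
  rw [← image_inversion_ball_diff_center hR,
    lintegral_image_eq_lintegral_abs_det_fderiv_mul volume
      (measurableSet_ball.diff (measurableSet_singleton c))
      (fun x hx => (hasFDerivAt_inversion hx.2).hasFDerivWithinAt)
      (inversion_injective c hR.ne').injOn]
  simp only [abs_det_smul_reflection, abs_sq, pow_mul]

end Inversion

section Reflection

variable {z : ℂ}

lemma inversion_zero_one (z : ℂ) : inversion 0 1 z = (conj z)⁻¹ := by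
  rw [inversion, Complex.inv_def, Complex.conj_conj, Complex.normSq_conj, Complex.normSq_eq_norm_sq]
  simp [mul_comm]

lemma setLIntegral_one_lt_norm_eq_inv_conj (u : ℂ → ℝ≥0∞) :
    ∫⁻ z in {z : ℂ | 1 < ‖z‖}, u z =
      ∫⁻ w in ball 0 1 \ {0}, ENNReal.ofReal ((‖w‖ ^ 4)⁻¹) * u (conj w)⁻¹ := by
  have hset : {z : ℂ | 1 < ‖z‖} = (closedBall 0 1)ᶜ := by
    ext z
    simp
  simp [hset, setLIntegral_compl_closedBall_eq_inversion one_pos, inversion_zero_one,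
    Complex.finrank_real_complex]

lemma inv_conj_mem_ball (hz : 1 < ‖z‖) : (conj z)⁻¹ ∈ ball 0 1 := by
  simpa using inv_lt_one_of_one_lt₀ hz

lemma norm_sub_inv_conj (hz : 1 ≤ ‖z‖) : ‖z - (conj z)⁻¹‖ = ‖z‖ - ‖z‖⁻¹ := by
  have hinv : (‖z‖ ^ 2)⁻¹ ≤ 1 := inv_le_one_of_one_le₀ (one_le_pow₀ hz)
  have hfactor : z - (conj z)⁻¹ = ((1 - (‖z‖ ^ 2)⁻¹ : ℝ) : ℂ) * z := by
    rw [Complex.inv_def, Complex.conj_conj, Complex.normSq_conj, Complex.normSq_eq_norm_sq]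
    push_cast
    ring
  rw [hfactor, norm_mul, Complex.norm_of_nonneg (sub_nonneg.2 hinv)]
  field_simp

lemma norm_sub_inv_conj_le (hz : 1 ≤ ‖z‖) : ‖z - (conj z)⁻¹‖ ≤ ‖z‖ := by
  rw [norm_sub_inv_conj hz]
  exact sub_le_self _ (by positivity)

lemma tendsto_inv_conj_cobounded : Tendsto (fun z : ℂ => (conj z)⁻¹) (cobounded ℂ) (𝓝 0) := by
  rw [tendsto_zero_iff_norm_tendsto_zero]
  simpa [Function.comp_def] using
    tendsto_inv_atTop_zero.comp (tendsto_norm_cobounded_atTop (E := ℂ))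

lemma inv_conj_ofReal_mul_exp (r θ : ℝ) :
    (conj (r * exp (θ * I)))⁻¹ = (r⁻¹ : ℝ) * exp (θ * I) := by
  rw [map_mul, ← Complex.exp_conj, mul_inv, ← Complex.exp_neg]
  simp

end Reflection

section Mobius

variable {a z : ℂ} {δ : ℝ}

lemma norm_one_sub_conj_mul_sq_sub (a z : ℂ) :
    ‖1 - conj a * z‖ ^ 2 - ‖a - z‖ ^ 2 = (1 - ‖a‖ ^ 2) * (1 - ‖z‖ ^ 2) := by
  simp only [← Complex.normSq_eq_norm_sq, Complex.normSq_apply, Complex.sub_re, Complex.sub_im,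
    Complex.mul_re, Complex.mul_im, Complex.conj_re, Complex.conj_im, Complex.one_re,
    Complex.one_im]
  ring

lemma norm_mobius_le_one (ha : ‖a‖ ≤ 1) (hz : ‖z‖ ≤ 1) : ‖mobius a z‖ ≤ 1 := by
  have hsq : ‖a - z‖ ^ 2 ≤ ‖1 - conj a * z‖ ^ 2 := by
    rw [← sub_nonneg, norm_one_sub_conj_mul_sq_sub]
    exact mul_nonneg (sub_nonneg.2 (pow_le_one₀ (norm_nonneg a) ha))
      (sub_nonneg.2 (pow_le_one₀ (norm_nonneg z) hz))
  rw [mobius, norm_div]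
  exact div_le_one_of_le₀ (abs_le_of_sq_le_sq' hsq (norm_nonneg _)).2 (norm_nonneg _)

lemma norm_mobius_le (ha : ‖a‖ < 1) (hz : ‖z‖ ≤ 1) (h : ‖a - z‖ ≤ δ * (1 - ‖a‖)) :
    ‖mobius a z‖ ≤ δ := by
  have hden : 1 - ‖a‖ ≤ ‖1 - conj a * z‖ := calc
    1 - ‖a‖ ≤ ‖(1 : ℂ)‖ - ‖conj a * z‖ := by
      rw [norm_one, norm_mul, Complex.norm_conj]
      exact sub_le_sub_left (mul_le_of_le_one_right (norm_nonneg a) hz) 1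
    _ ≤ ‖1 - conj a * z‖ := norm_sub_norm_le _ _
  have hδ : 0 ≤ δ := nonneg_of_mul_nonneg_left ((norm_nonneg _).trans h) (sub_pos.2 ha)
  rw [mobius, norm_div, div_le_iff₀ ((sub_pos.2 ha).trans_le hden)]
  exact h.trans (mul_le_mul_of_nonneg_left hden hδ)

-- At the pole `z = a` both sides are `0`, through the conventions `x / 0 = 0` and `0⁻¹ = 0`.
lemma mobius_inv_conj (a : ℂ) (hz : z ≠ 0) :
    mobius a (conj z)⁻¹ = (conj (mobius a z))⁻¹ := by
  have hz' : conj z ≠ 0 := (map_ne_zero _).2 hz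
  simp only [mobius, map_div₀, map_sub, map_mul, map_one, Complex.conj_conj, inv_div]
  rw [← mul_div_mul_right _ _ hz', sub_mul, sub_mul, inv_mul_cancel₀ hz', mul_assoc,
    inv_mul_cancel₀ hz', ← neg_div_neg_eq]
  ring

end Mobius

/-- Membership in the Bloch space of the disk. The weight `1 - ‖z‖` is comparable to the usual
`1 - ‖z‖ ^ 2`. -/
def MemBloch (f : ℂ → ℂ) : Prop :=
  ∃ C : ℝ, ∀ z ∈ ball (0 : ℂ) 1, (1 - ‖z‖) * ‖deriv f z‖ ≤ C

section Bloch

variable {K : ℝ → ℝ} {f : ℂ → ℂ}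

lemma exists_le_one_sub_sq_of_eventually_nhdsLE_one {p : ℝ → Prop} (hp : ∀ᶠ t in 𝓝[≤] 1, p t) :
    ∃ δ ∈ Ioc (0 : ℝ) 1, ∀ s : ℝ, |s| ≤ δ → p (1 - s ^ 2) := by
  have hlim : Tendsto (fun s : ℝ => 1 - s ^ 2) (𝓝 0) (𝓝[≤] 1) := by
    refine tendsto_nhdsWithin_iff.2 ⟨?_, .of_forall fun s => sub_le_self 1 (sq_nonneg s)⟩
    exact (by fun_prop : Continuous fun s : ℝ => 1 - s ^ 2).tendsto' 0 1 (by norm_num)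
  obtain ⟨ε, hε, hball⟩ := nhds_basis_closedBall.eventually_iff.1 (hlim.eventually hp)
  exact ⟨min ε 1, ⟨lt_min hε one_pos, min_le_right _ _⟩, fun s hs =>
    hball (by simpa using hs.trans (min_le_left _ _))⟩

lemma ball_mul_one_sub_norm_subset {a : ℂ} {δ : ℝ} (hδ : δ ≤ 1) (ha : ‖a‖ ≤ 1) :
    ball a (δ * (1 - ‖a‖)) ⊆ ball 0 1 := by
  refine ball_subset_ball' ?_
  rw [dist_zero_right]
  linarith [mul_le_of_le_one_left (sub_nonneg.2 ha) hδ]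

lemma mul_setLIntegral_enorm_deriv_sq_le {c δ : ℝ} (hc : 0 ≤ c) (hδ : δ ≤ 1)
    (hK : ∀ s : ℝ, |s| ≤ δ → c ≤ K (1 - s ^ 2)) {a : ℂ} (ha : ‖a‖ < 1) :
    ENNReal.ofReal c * ∫⁻ z in ball a (δ * (1 - ‖a‖)), ‖deriv f z ^ 2‖ₑ ≤
      ∫⁻ z in ball 0 1, ENNReal.ofReal (‖deriv f z‖ ^ 2 * K (1 - ‖mobius a z‖ ^ 2)) := by
  have hsub : ball a (δ * (1 - ‖a‖)) ⊆ ball 0 1 := ball_mul_one_sub_norm_subset hδ ha.le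
  rw [← lintegral_const_mul' _ _ ENNReal.ofReal_ne_top]
  refine le_trans (setLIntegral_mono' measurableSet_ball fun z hz => ?_) (lintegral_mono_set hsub)
  have hmobius : ‖mobius a z‖ ≤ δ :=
    norm_mobius_le ha (mem_ball_zero_iff.1 (hsub hz)).le (mem_ball_iff_norm'.1 hz).le
  rw [← ofReal_norm, ← ENNReal.ofReal_mul hc, norm_pow, mul_comm]
  gcongr
  exact hK _ ((abs_norm _).trans_le hmobius)

theorem MemQK.memBloch (h : MemQK K f) (hf : DifferentiableOn ℂ f (ball 0 1))
    (hK : ∃ c > 0, ∀ᶠ t in 𝓝[≤] 1, c ≤ K t) : MemBloch f := by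
  obtain ⟨c, hc, hKc⟩ := hK
  obtain ⟨δ, ⟨hδ, hδ1⟩, hKδ⟩ := exists_le_one_sub_sq_of_eventually_nhdsLE_one hKc
  unfold MemQK at h
  set M := ⨆ a ∈ ball (0 : ℂ) 1, ∫⁻ z in ball (0 : ℂ) 1,
    ENNReal.ofReal (‖deriv f z‖ ^ 2 * K (1 - ‖mobius a z‖ ^ 2))
  refine ⟨√(M.toReal / (c * (π * δ ^ 2))), fun a ha => Real.le_sqrt_of_sq_le ?_⟩
  have ha' : ‖a‖ < 1 := mem_ball_zero_iff.1 ha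
  have hρ : 0 ≤ δ * (1 - ‖a‖) := mul_nonneg hδ.le (sub_pos.2 ha').le
  have hsub : ball a (δ * (1 - ‖a‖)) ⊆ ball 0 1 := ball_mul_one_sub_norm_subset hδ1 ha'.le
  have harea : ENNReal.ofReal (c * (π * (δ * (1 - ‖a‖)) ^ 2) * ‖deriv f a‖ ^ 2) ≤ M := calc
    _ = ENNReal.ofReal c * (volume (ball a (δ * (1 - ‖a‖))) * ‖deriv f a ^ 2‖ₑ) := by
      rw [Complex.volume_ball, ← ofReal_norm, norm_pow, ENNReal.ofReal_mul (by positivity),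
        ENNReal.ofReal_mul hc.le, ENNReal.ofReal_mul Real.pi_pos.le, ENNReal.ofReal_pow hρ,
        ← NNReal.coe_real_pi, ENNReal.ofReal_coe_nnreal]
      ring
    _ ≤ ENNReal.ofReal c * ∫⁻ z in ball a (δ * (1 - ‖a‖)), ‖deriv f z ^ 2‖ₑ := by
      gcongr
      exact volume_ball_mul_enorm_le_lintegral_ball (((hf.deriv isOpen_ball).mono hsub).pow 2)
    _ ≤ M := (mul_setLIntegral_enorm_deriv_sq_le hc.le hδ1 hKδ ha').trans
      (le_iSup₂_of_le a ha le_rfl)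
  rw [ENNReal.ofReal_le_iff_le_toReal h.ne] at harea
  rw [le_div_iff₀ (by positivity)]
  linear_combination harea

lemma MemBloch.exists_norm_le (h : MemBloch f) (hf : DifferentiableOn ℂ f (ball 0 1)) :
    ∃ C, ∀ z ∈ ball (0 : ℂ) 1, ‖f z‖ ≤ ‖f 0‖ - C * Real.log (1 - ‖z‖) := by
  obtain ⟨C, hC⟩ := h
  refine ⟨C, fun z hz => ?_⟩
  rw [mem_ball_zero_iff] at hz
  have hlt : ∀ t ∈ Icc (0 : ℝ) 1, t * ‖z‖ < 1 := fun t ht =>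
    (mul_le_of_le_one_left (norm_nonneg z) ht.2).trans_lt hz
  have hnorm : ∀ t ∈ Icc (0 : ℝ) 1, ‖t * z‖ = t * ‖z‖ := fun t ht => by
    rw [norm_mul, Complex.norm_of_nonneg ht.1]
  have hmem : ∀ t ∈ Icc (0 : ℝ) 1, (t : ℂ) * z ∈ ball 0 1 := fun t ht => by
    rw [mem_ball_zero_iff, hnorm t ht]
    exact hlt t ht
  have hder : ∀ t ∈ Icc (0 : ℝ) 1,
      HasDerivAt (fun s : ℝ => f (s * z)) (deriv f (t * z) * z) t := fun t ht =>
    ((hf.differentiableAt (isOpen_ball.mem_nhds (hmem t ht))).hasDerivAt.comp (t : ℂ)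
      (hasDerivAt_mul_const z)).comp_ofReal
  have hmajor : ∀ t ∈ Icc (0 : ℝ) 1, HasDerivAt
      (fun s => ‖f 0‖ - C * Real.log (1 - s * ‖z‖)) (C / (1 - t * ‖z‖) * ‖z‖) t := fun t ht =>
    (((((hasDerivAt_mul_const ‖z‖).const_sub 1).log (sub_pos.2 (hlt t ht)).ne').const_mul
      C).const_sub ‖f 0‖).congr_deriv (by ring)
  have hle : ∀ t ∈ Ico (0 : ℝ) 1, ‖deriv f (t * z) * z‖ ≤ C / (1 - t * ‖z‖) * ‖z‖ := by
    intro t ht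
    have ht := Ico_subset_Icc_self ht
    have hpos := sub_pos.2 (hlt t ht)
    rw [norm_mul]
    gcongr
    rw [le_div_iff₀' hpos, ← hnorm t ht]
    exact hC _ (hmem t ht)
  simpa using image_norm_le_of_norm_deriv_right_le_deriv_boundary'
    (fun t ht => (hder t ht).continuousAt.continuousWithinAt)
    (fun t ht => (hder t (Ico_subset_Icc_self ht)).hasDerivWithinAt) (by simp)
    (fun t ht => (hmajor t ht).continuousAt.continuousWithinAt)
    (fun t ht => (hmajor t (Ico_subset_Icc_self ht)).hasDerivWithinAt) hle
    (right_mem_Icc.2 zero_le_one)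

theorem MemBloch.tendsto_one_sub_norm_mul_norm (h : MemBloch f)
    (hf : DifferentiableOn ℂ f (ball 0 1)) :
    Tendsto (fun z => (1 - ‖z‖) * ‖f z‖) (comap norm (𝓝[<] 1)) (𝓝 0) := by
  obtain ⟨C, hC⟩ := h.exists_norm_le hf
  have hmajor : Tendsto (fun t : ℝ => (1 - t) * ‖f 0‖ - C * ((1 - t) * Real.log (1 - t)))
      (𝓝[<] 1) (𝓝 0) := by
    have : Continuous fun t : ℝ => (1 - t) * Real.log (1 - t) :=
      Real.continuous_mul_log.comp (continuous_const.sub continuous_id)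
    exact (Continuous.tendsto' (by fun_prop) 1 0 (by simp)).mono_left nhdsWithin_le_nhds
  have hball : ∀ᶠ z : ℂ in comap norm (𝓝[<] 1), ‖z‖ < 1 :=
    tendsto_comap.eventually self_mem_nhdsWithin
  refine squeeze_zero' ?_ ?_ (hmajor.comp tendsto_comap)
  · filter_upwards [hball] with z hz using mul_nonneg (sub_pos.2 hz).le (norm_nonneg _)
  · filter_upwards [hball] with z hz
    have := mul_le_mul_of_nonneg_left (hC z (mem_ball_zero_iff.2 hz)) (sub_pos.2 hz).le
    dsimp only [Function.comp]
    linarith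

end Bloch

/-- The extension of `F` across the unit circle by its first order Taylor polynomial at the
reflected point `(conj z)⁻¹`, where `f` stands for the derivative of `F`. -/
def reflectedTaylor (F f : ℂ → ℂ) (z : ℂ) : ℂ :=
  F (conj z)⁻¹ + f (conj z)⁻¹ * (z - (conj z)⁻¹)

section ReflectedTaylor

variable {F f : ℂ → ℂ} {f' z : ℂ}

lemma contDiffOn_reflectedTaylor {m : WithTop ℕ∞} (hF : ContDiffOn ℝ m F (ball 0 1))
    (hf : ContDiffOn ℝ m f (ball 0 1)) : ContDiffOn ℝ m (reflectedTaylor F f) {z | 1 < ‖z‖} := by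
  have hinv : ContDiffOn ℝ m (fun z : ℂ => (conj z)⁻¹) {z | 1 < ‖z‖} :=
    Complex.conjCLE.contDiff.contDiffOn.inv fun z hz =>
      (map_ne_zero (conj : ℂ →+* ℂ)).2 (norm_pos_iff.1 (one_pos.trans hz))
  have hmaps : MapsTo (fun z : ℂ => (conj z)⁻¹) {z | 1 < ‖z‖} (ball 0 1) :=
    fun z hz => inv_conj_mem_ball hz
  exact (hF.comp hinv hmaps).add ((hf.comp hinv hmaps).mul (contDiffOn_id.sub hinv))

lemma dbar_comp_conj_add_mul {A B : ℂ → ℂ} {A' B' : ℂ} (hA : HasDerivAt A A' (conj z))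
    (hB : HasDerivAt B B' (conj z)) :
    dbar (fun z => A (conj z) + B (conj z) * z) z = A' + B' * z := by
  have hconj : HasFDerivAt (conj : ℂ → ℂ) (Complex.conjCLE : ℂ →L[ℝ] ℂ) z :=
    Complex.conjCLE.hasFDerivAt
  have hsum := ((hA.hasFDerivAt.restrictScalars ℝ).comp z hconj).add
    (((hB.hasFDerivAt.restrictScalars ℝ).comp z hconj).mul (hasFDerivAt_id z))
  have hfderiv : HasFDerivAt (fun z => A (conj z) + B (conj z) * z) _ z := hsum
  rw [dbar, hfderiv.fderiv]
  simp only [one_div, Function.comp_apply, id_eq, add_apply, ContinuousLinearMap.comp_apply,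
    ContinuousLinearEquiv.coe_coe, ContinuousAlgEquiv.coeCLE_apply, conjCAE_apply, map_one,
    ContinuousLinearMap.coe_restrictScalars', ContinuousLinearMap.toSpanSingleton_apply,
    smul_eq_mul, one_mul, smul_apply, ContinuousLinearMap.id_apply, mul_one, conj_I, neg_mul,
    mul_neg]
  linear_combination (-(A' + B' * z) / 2 + B (conj z) / 2) * Complex.I_sq

theorem dbar_reflectedTaylor (hz : z ≠ 0) (hF : HasDerivAt F (f (conj z)⁻¹) (conj z)⁻¹)
    (hf : HasDerivAt f f' (conj z)⁻¹) :
    dbar (reflectedTaylor F f) z = -(f' * (conj z)⁻¹ ^ 2 * (z - (conj z)⁻¹)) := by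
  have hinv : HasDerivAt (fun v : ℂ => v⁻¹) (-(conj z)⁻¹ ^ 2) (conj z) := by
    simpa using hasDerivAt_inv ((map_ne_zero _).2 hz)
  have hF' := hF.comp (conj z) hinv
  have hf' := hf.comp (conj z) hinv
  have hsplit : reflectedTaylor F f = fun z =>
      (F (conj z)⁻¹ - f (conj z)⁻¹ * (conj z)⁻¹) + f (conj z)⁻¹ * z := by
    funext z
    rw [reflectedTaylor]
    ring
  rw [hsplit, dbar_comp_conj_add_mul (A := fun v => F v⁻¹ - f v⁻¹ * v⁻¹) (B := fun v => f v⁻¹)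
    (hF'.sub (hf'.mul hinv)) hf']
  simp only [Function.comp]
  ring

lemma sub_inv_le_pow_sub_one {s : ℝ} {n : ℕ} (hs : 1 ≤ s) (hn : 2 ≤ n) : s - s⁻¹ ≤ s ^ n - 1 := by
  have : 0 < s := one_pos.trans_le hs
  calc s - s⁻¹ = s⁻¹ * (s ^ 2 - 1) := by field_simp
    _ ≤ s ^ 2 - 1 :=
      mul_le_of_le_one_left (sub_nonneg.2 (one_le_pow₀ hs)) (inv_le_one_of_one_le₀ hs)
    _ ≤ s ^ n - 1 := by gcongr

lemma norm_dbar_reflectedTaylor_le {n : ℕ} (hn : 2 ≤ n) (hz : 1 ≤ ‖z‖)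
    (hF : HasDerivAt F (f (conj z)⁻¹) (conj z)⁻¹) (hf : HasDerivAt f f' (conj z)⁻¹) :
    ‖dbar (reflectedTaylor F f) z‖ ≤ ‖f'‖ * ‖z‖⁻¹ ^ 2 * (‖z‖ ^ n - 1) := by
  rw [dbar_reflectedTaylor (norm_pos_iff.1 (one_pos.trans_le hz)) hF hf, norm_neg, norm_mul,
    norm_mul, norm_pow, norm_inv, Complex.norm_conj, norm_sub_inv_conj hz]
  exact mul_le_mul_of_nonneg_left (sub_inv_le_pow_sub_one hz hn) (by positivity)

end ReflectedTaylor

section BoundaryValues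

variable {F f : ℂ → ℂ} {Fstar : ℝ → ℂ}

lemma tendsto_inv_nhdsGT_one : Tendsto (fun r : ℝ => r⁻¹) (𝓝[>] 1) (𝓝[<] 1) := by
  refine tendsto_nhdsWithin_iff.2 ⟨?_, ?_⟩
  · exact tendsto_nhdsWithin_of_tendsto_nhds (by simpa using tendsto_inv₀ (one_ne_zero (α := ℝ)))
  · filter_upwards [self_mem_nhdsWithin] with r hr using inv_lt_one_of_one_lt₀ (mem_Ioi.1 hr)

lemma tendsto_inv_conj_comap_norm_nhdsGT :
    Tendsto (fun z : ℂ => (conj z)⁻¹) (comap norm (𝓝[>] 1)) (comap norm (𝓝[<] 1)) := by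
  simpa [tendsto_comap_iff, Function.comp_def] using
    tendsto_inv_nhdsGT_one.comp (tendsto_comap (f := (norm : ℂ → ℝ)))

lemma tendsto_mul_sub_inv_conj
    (h : Tendsto (fun w => (1 - ‖w‖) * ‖f w‖) (comap norm (𝓝[<] 1)) (𝓝 0)) :
    Tendsto (fun z => f (conj z)⁻¹ * (z - (conj z)⁻¹)) (comap norm (𝓝[>] 1)) (𝓝 0) := by
  rw [tendsto_zero_iff_norm_tendsto_zero]
  have hnorm : Tendsto (fun z : ℂ => ‖z‖ + 1) (comap norm (𝓝[>] 1)) (𝓝 (1 + 1)) :=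
    (tendsto_comap.mono_right nhdsWithin_le_nhds).add_const 1
  have hmul := (h.comp tendsto_inv_conj_comap_norm_nhdsGT).mul hnorm
  rw [zero_mul] at hmul
  refine hmul.congr' ?_
  filter_upwards [tendsto_comap.eventually self_mem_nhdsWithin] with z hz
  have hz : 1 < ‖z‖ := hz
  have hz0 : ‖z‖ ≠ 0 := (one_pos.trans hz).ne'
  rw [norm_mul, norm_sub_inv_conj hz.le, Function.comp_apply, norm_inv, Complex.norm_conj]
  field_simp
  ring

theorem RadialLimitIn.radialLimitOut_reflectedTaylor (hF : RadialLimitIn F Fstar)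
    (h : Tendsto (fun w => (1 - ‖w‖) * ‖f w‖) (comap norm (𝓝[<] 1)) (𝓝 0)) :
    RadialLimitOut (reflectedTaylor F f) Fstar := by
  unfold RadialLimitIn at hF
  unfold RadialLimitOut
  filter_upwards [hF] with θ hθ
  have hnorm : Tendsto (fun r : ℝ => ‖(r : ℂ) * exp (θ * I)‖) (𝓝[>] 1) (𝓝[>] 1) := by
    refine tendsto_id.congr' ?_
    filter_upwards [self_mem_nhdsWithin] with r hr
    rw [norm_mul, Complex.norm_exp_ofReal_mul_I, mul_one,
      Complex.norm_of_nonneg (one_pos.trans hr).le, id]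
  have hsum := (hθ.comp tendsto_inv_nhdsGT_one).add
    ((tendsto_mul_sub_inv_conj h).comp (tendsto_comap_iff.2 hnorm))
  simpa only [Function.comp_def, reflectedTaylor, inv_conj_ofReal_mul_exp, add_zero] using hsum

end BoundaryValues

section Growth

variable {F f : ℂ → ℂ}

lemma BigOPow.of_isBigO {g : ℂ → ℂ} {m : ℕ} (h : g =O[cobounded ℂ] fun z => ‖z‖ ^ m) :
    BigOPow g m := by
  obtain ⟨C, hC, hbound⟩ := h.exists_pos
  obtain ⟨R, -, hR⟩ := (hasBasis_cobounded_norm (E := ℂ)).eventually_iff.1 hbound.bound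
  refine ⟨C, max R 1, hC, by positivity, fun z hz => ?_⟩
  simpa using hR ((le_max_left R 1).trans hz)

lemma isBigO_one_norm_pow (m : ℕ) :
    (fun _ : ℂ => (1 : ℝ)) =O[cobounded ℂ] fun z => ‖z‖ ^ m := by
  refine .of_bound 1 ?_
  filter_upwards [eventually_cobounded_le_norm 1] with z hz
  simpa using one_le_pow₀ hz

lemma isBigO_one_comp_inv_conj {g : ℂ → ℂ} (hg : ContinuousAt g 0) :
    (fun z => g (conj z)⁻¹) =O[cobounded ℂ] fun _ => (1 : ℝ) :=
  (hg.tendsto.comp tendsto_inv_conj_cobounded).isBigO_one ℝ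

theorem isBigO_reflectedTaylor (hF : ContinuousAt F 0) (hf : ContinuousAt f 0) {m : ℕ}
    (hm : m ≠ 0) : reflectedTaylor F f =O[cobounded ℂ] fun z => ‖z‖ ^ m := by
  have hsub : (fun z : ℂ => z - (conj z)⁻¹) =O[cobounded ℂ] fun z => ‖z‖ ^ m := by
    refine .of_bound 1 ?_
    filter_upwards [eventually_cobounded_le_norm 1] with z hz
    simpa using (norm_sub_inv_conj_le hz).trans (le_self_pow₀ hz hm)
  have hmul := (isBigO_one_comp_inv_conj hf).mul hsub
  simp only [one_mul] at hmul
  exact ((isBigO_one_comp_inv_conj hF).trans (isBigO_one_norm_pow m)).add hmul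

theorem isBigO_dbar_reflectedTaylor (hF : ∀ᶠ w in 𝓝 0, HasDerivAt F (f w) w)
    (hf : ∀ᶠ w in 𝓝 0, DifferentiableAt ℂ f w) (hf' : ContinuousAt (deriv f) 0) :
    dbar (reflectedTaylor F f) =O[cobounded ℂ] fun _ => (1 : ℝ) := by
  refine IsBigO.trans (.of_bound 1 ?_) (isBigO_one_comp_inv_conj hf')
  filter_upwards [eventually_cobounded_le_norm 1, tendsto_inv_conj_cobounded.eventually hF,
    tendsto_inv_conj_cobounded.eventually hf] with z hz hFz hfz
  have : 0 < ‖z‖ := one_pos.trans_le hz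
  calc ‖dbar (reflectedTaylor F f) z‖
      ≤ ‖deriv f (conj z)⁻¹‖ * ‖z‖⁻¹ ^ 2 * (‖z‖ ^ 2 - 1) :=
        norm_dbar_reflectedTaylor_le le_rfl hz hFz hfz.hasDerivAt
    _ ≤ ‖deriv f (conj z)⁻¹‖ * ‖z‖⁻¹ ^ 2 * ‖z‖ ^ 2 := by
        gcongr
        exact sub_le_self _ zero_le_one
    _ = 1 * ‖deriv f (conj z)⁻¹‖ := by field_simp

end Growth

section Integral

variable {K : ℝ → ℝ} {F f : ℂ → ℂ}

theorem setLIntegral_dbar_reflectedTaylor_le (hK : ∀ t ∈ Icc (0 : ℝ) 1, 0 ≤ K t) {n : ℕ}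
    (hn : 2 ≤ n) (hF : ∀ w ∈ ball (0 : ℂ) 1, HasDerivAt F (f w) w)
    (hf : DifferentiableOn ℂ f (ball 0 1)) {a : ℂ} (ha : ‖a‖ ≤ 1) :
    ∫⁻ z in {z : ℂ | 1 < ‖z‖}, ENNReal.ofReal
        (‖dbar (reflectedTaylor F f) z‖ ^ 2 / (‖z‖ ^ n - 1) ^ 2 * K (1 - 1 / ‖mobius a z‖ ^ 2)) ≤
      ∫⁻ w in ball 0 1, ENNReal.ofReal (‖deriv f w‖ ^ 2 * K (1 - ‖mobius a w‖ ^ 2)) := by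
  rw [setLIntegral_one_lt_norm_eq_inv_conj]
  refine le_trans (setLIntegral_mono' (measurableSet_ball.diff (measurableSet_singleton 0)) ?_)
    (lintegral_mono_set sdiff_subset)
  rintro w ⟨hw, hw0⟩
  have hw0 : w ≠ 0 := hw0
  have hpos : 0 < ‖w‖ := norm_pos_iff.2 hw0
  have hz : 1 < ‖(conj w)⁻¹‖ := by
    simpa using (one_lt_inv₀ hpos).2 (mem_ball_zero_iff.1 hw)
  have hpow : 0 < ‖(conj w)⁻¹‖ ^ n - 1 := sub_pos.2 (one_lt_pow₀ hz (by lia))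
  have hdbar : ‖dbar (reflectedTaylor F f) (conj w)⁻¹‖ / (‖(conj w)⁻¹‖ ^ n - 1) ≤
      ‖deriv f w‖ * ‖w‖ ^ 2 := by
    rw [div_le_iff₀ hpow]
    simpa using norm_dbar_reflectedTaylor_le (F := F) (f := f) hn hz.le (by simpa using hF w hw)
      (by simpa using (hf.differentiableAt (isOpen_ball.mem_nhds hw)).hasDerivAt)
  have hmobius : 1 / ‖mobius a (conj w)⁻¹‖ ^ 2 = ‖mobius a w‖ ^ 2 := by
    rw [mobius_inv_conj a hw0]
    simp
  have hKnn : 0 ≤ K (1 - ‖mobius a w‖ ^ 2) := by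
    have := pow_le_one₀ (n := 2) (norm_nonneg _)
      (norm_mobius_le_one ha (mem_ball_zero_iff.1 hw).le)
    exact hK _ ⟨sub_nonneg.2 this, sub_le_self 1 (sq_nonneg _)⟩
  rw [← ENNReal.ofReal_mul (by positivity), hmobius, ← div_pow]
  refine ENNReal.ofReal_le_ofReal ?_
  calc (‖w‖ ^ 4)⁻¹ * ((‖dbar (reflectedTaylor F f) (conj w)⁻¹‖ / (‖(conj w)⁻¹‖ ^ n - 1)) ^ 2 *
        K (1 - ‖mobius a w‖ ^ 2))
      ≤ (‖w‖ ^ 4)⁻¹ * ((‖deriv f w‖ * ‖w‖ ^ 2) ^ 2 * K (1 - ‖mobius a w‖ ^ 2)) := by gcongr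
    _ = ‖deriv f w‖ ^ 2 * K (1 - ‖mobius a w‖ ^ 2) := by field_simp

end Integral

theorem qk_implies_pseudoanalytic_extension_general {K : ℝ → ℝ}
    (hKnn : ∀ t ∈ Icc (0 : ℝ) 1, 0 ≤ K t) (hK : ∃ c > 0, ∀ᶠ t in 𝓝[≤] 1, c ≤ K t)
    {n : ℕ} (hn : 2 ≤ n) {f F : ℂ → ℂ} (hF : ∀ z ∈ ball (0 : ℂ) 1, HasDerivAt F (f z) z)
    (hfQK : MemQK K f) {Fstar : ℝ → ℂ} (hFb : RadialLimitIn F Fstar) :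
    ∃ Ftil : ℂ → ℂ,
      ContDiffOn ℝ 1 Ftil {z : ℂ | 1 < ‖z‖} ∧
      RadialLimitOut Ftil Fstar ∧
      BigOPow Ftil n ∧
      BigOPow (dbar Ftil) (n - 2) ∧
      (⨆ a ∈ ball (0 : ℂ) 1, ∫⁻ z in {z : ℂ | 1 < ‖z‖},
          ENNReal.ofReal (‖dbar Ftil z‖ ^ 2 / (‖z‖ ^ n - 1) ^ 2 *
            K (1 - 1 / ‖mobius a z‖ ^ 2))) < ⊤ := by
  have hFd : DifferentiableOn ℂ F (ball 0 1) := fun z hz =>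
    (hF z hz).differentiableAt.differentiableWithinAt
  have hfd : DifferentiableOn ℂ f (ball 0 1) :=
    (hFd.deriv isOpen_ball).congr fun z hz => (hF z hz).deriv.symm
  have hnhds : ball (0 : ℂ) 1 ∈ 𝓝 0 := ball_mem_nhds 0 one_pos
  refine ⟨reflectedTaylor F f, ?_, ?_, ?_, ?_, ?_⟩
  · exact contDiffOn_reflectedTaylor ((hFd.contDiffOn isOpen_ball).restrict_scalars ℝ)
      ((hfd.contDiffOn isOpen_ball).restrict_scalars ℝ)
  · exact hFb.radialLimitOut_reflectedTaylor
      ((hfQK.memBloch hfd hK).tendsto_one_sub_norm_mul_norm hfd)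
  · exact .of_isBigO (isBigO_reflectedTaylor (hFd.continuousOn.continuousAt hnhds)
      (hfd.continuousOn.continuousAt hnhds) (by lia))
  · exact .of_isBigO ((isBigO_dbar_reflectedTaylor (mem_of_superset hnhds hF)
      (hfd.eventually_differentiableAt hnhds)
      ((hfd.deriv isOpen_ball).continuousOn.continuousAt hnhds)).trans (isBigO_one_norm_pow _))
  · exact (iSup₂_mono fun a ha => setLIntegral_dbar_reflectedTaylor_le hKnn hn hF hfd
      (mem_ball_zero_iff.1 ha).le).trans_lt hfQK

/-- Theorem 2.1, (i) ⇒ (ii): a `Q_K` function admits a pseudoanalytic extension of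
its primitive. -/
theorem qk_implies_pseudoanalytic_extension
    (K : ℝ → ℝ)
    (hKrc : ∀ x : ℝ, 0 ≤ x → ContinuousWithinAt K (Set.Ici x) x)
    (hKmono : MonotoneOn K (Set.Ici (0 : ℝ)))
    (hKnn : ∀ t : ℝ, 0 ≤ t → 0 ≤ K t)
    (hKpos : ∀ t : ℝ, 0 < t → 0 < K t)
    (hKdbl : ∃ C : ℝ, ∀ t ∈ Set.Ioo (0 : ℝ) 1, K (2 * t) ≤ C * K t)
    (h21 : Cond21 K)
    (h22 : ∃ q ∈ Set.Ioo (0 : ℝ) 2, Cond22 K q)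
    (n : ℕ) (hn : 2 ≤ n)
    (f F : ℂ → ℂ)
    (hf : DifferentiableOn ℂ f (ball (0 : ℂ) 1))
    (hfQK : MemQK K f)
    (hF0 : F 0 = 0)
    (hFprim : ∀ z ∈ ball (0 : ℂ) 1, HasDerivAt F (f z) z)
    (hFH2 : MemH2 F)
    (Fstar : ℝ → ℂ)
    (hFb : RadialLimitIn F Fstar) :
    ∃ Ftil : ℂ → ℂ,
      ContDiffOn ℝ 1 Ftil {z : ℂ | 1 < ‖z‖} ∧
      RadialLimitOut Ftil Fstar ∧
      BigOPow Ftil n ∧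
      BigOPow (dbar Ftil) (n - 2) ∧
      (⨆ a ∈ ball (0 : ℂ) 1, ∫⁻ z in {z : ℂ | 1 < ‖z‖},
          ENNReal.ofReal (‖dbar Ftil z‖ ^ 2 / (‖z‖ ^ n - 1) ^ 2 *
            K (1 - 1 / ‖mobius a z‖ ^ 2))) < ⊤ := by
  have hpos : (0 : ℝ) < 1 / 2 := by norm_num
  refine qk_implies_pseudoanalytic_extension_general (fun t ht => hKnn t ht.1)
    ⟨K (1 / 2), hKpos _ hpos, ?_⟩ hn hFprim hfQK hFb
  filter_upwards [Ioc_mem_nhdsLE (by norm_num : (1 / 2 : ℝ) < 1)] with t ht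
  exact hKmono hpos.le (hpos.trans ht.1).le ht.1.le

end
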